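/- For every ε > 0 and every λ ∈ ℂ with Im λ ≠ 0, if W(ε,λ) = 0 then ∂W/∂λ(ε,λ) ≠ 0. In other words, every non-real eigenvalue of the model operator T(ε) is a simple eigenvalue: collisions of eigenvalues of the model family T(ε) are impossible outside the real axis. -/

import Mathlib

open Complex MeasureTheory Real

noncomputable section

/-- `w` is an entire solution of the Airy equation `w'' = z·w`
with prescribed (real) values of `w` and `w'` at the origin. -/
def IsAiry (w : ℂ → ℂ) (w0 w0' : ℝ) : Prop :=
  Differentiable ℂ w ∧ Differentiable ℂ (deriv w) ∧
  (∀ z : ℂ, deriv (deriv w) z = z * w z) ∧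
  w 0 = (w0 : ℂ) ∧ deriv w 0 = (w0' : ℂ)

/-- `Ai` is the standard Airy function of the first kind. -/
def IsAiryAi (Ai : ℂ → ℂ) : Prop :=
  IsAiry Ai ((3 : ℝ) ^ (-(2 : ℝ)/3) / Real.Gamma (2/3))
    (-((3 : ℝ) ^ (-(1 : ℝ)/3)) / Real.Gamma (1/3))

/-- `Bi` is the standard Airy function of the second kind. -/
def IsAiryBi (Bi : ℂ → ℂ) : Prop :=
  IsAiry Bi ((3 : ℝ) ^ (-(1 : ℝ)/6) / Real.Gamma (2/3))
    ((3 : ℝ) ^ ((1 : ℝ)/6) / Real.Gamma (1/3))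

/-- `U₋ = -√3·Ai + Bi`. -/
def Uminus (Ai Bi : ℂ → ℂ) : ℂ → ℂ := fun z => -(Real.sqrt 3 : ℂ) * Ai z + Bi z

/-- `U₊ = √3·Ai + Bi`. -/
def Uplus (Ai Bi : ℂ → ℂ) : ℂ → ℂ := fun z => (Real.sqrt 3 : ℂ) * Ai z + Bi z

/-- The moduli of the zeros of `U` on the open ray `arg z = π/3`. -/
def rayZeroModuli (U : ℂ → ℂ) : Set ℝ :=
  {r : ℝ | 0 < r ∧ U ((r : ℂ) * Complex.exp ((π/3 : ℝ) * Complex.I)) = 0}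

/-- The characteristic determinant `W(ε,λ)` of the model problem
`-ε⁻¹ y'' + i x y = λ y`, `y(-1) = y(1) = 0`. -/
def airyW (Ai Bi : ℂ → ℂ) (ε : ℝ) (lam : ℂ) : ℂ :=
  Ai ((ε ^ ((1:ℝ)/3) : ℝ) * (lam + Complex.I)) * Bi ((ε ^ ((1:ℝ)/3) : ℝ) * (lam - Complex.I))
  - Ai ((ε ^ ((1:ℝ)/3) : ℝ) * (lam - Complex.I)) * Bi ((ε ^ ((1:ℝ)/3) : ℝ) * (lam + Complex.I))

open Filter Topology Set ComplexConjugate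

/-- The moment `∫₀^∞ rⁿ exp (-r³/3 - ω z r) dr` of the Airy kernel along the ray through `ω`. -/
def airyMoment (n : ℕ) (ω z : ℂ) : ℂ :=
  ∫ r in Ioi (0 : ℝ), (r : ℂ) ^ n * Complex.exp (-(r : ℂ) ^ 3 / 3 - ω * z * r)

lemma norm_airyMoment_integrand (n : ℕ) (ω z : ℂ) {r : ℝ} (hr : 0 < r) :
    ‖(r : ℂ) ^ n * Complex.exp (-(r : ℂ) ^ 3 / 3 - ω * z * r)‖ =
      r ^ n * Real.exp (-r ^ 3 / 3 - (ω * z).re * r) := by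
  have h : (-(r : ℂ) ^ 3 / 3 - ω * z * r).re = -r ^ 3 / 3 - (ω * z).re * r := by
    have : (-(r : ℂ) ^ 3 / 3 - ω * z * r) = ((-r ^ 3 / 3 : ℝ) : ℂ) - ω * z * r := by push_cast; ring
    rw [this, Complex.sub_re, Complex.ofReal_re, Complex.re_mul_ofReal]
  rw [norm_mul, norm_pow, Complex.norm_exp, h, Complex.norm_real, Real.norm_of_nonneg hr.le]

lemma pow_le_factorial_mul_exp (n : ℕ) {r : ℝ} (hr : 0 ≤ r) :
    r ^ n ≤ n.factorial * Real.exp r := by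
  have h := Real.pow_div_factorial_le_exp r hr n
  rwa [div_le_iff₀' (by positivity)] at h

lemma integrableOn_pow_mul_exp_neg_cube (n : ℕ) (K : ℝ) :
    IntegrableOn (fun r : ℝ => r ^ n * Real.exp (-r ^ 3 / 3 + K * r)) (Ioi 0) := by
  set m : ℝ := |K| + 2 with hm
  have hbase : IntegrableOn (fun r : ℝ =>
      (n.factorial * Real.exp (2 * m ^ 3 / 3)) * Real.exp (-1 * r)) (Ioi 0) :=
    (exp_neg_integrableOn_Ioi 0 one_pos).const_mul _
  refine Integrable.mono' hbase (by fun_prop) ?_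
  filter_upwards [ae_restrict_mem measurableSet_Ioi] with r hr
  have hr : 0 < r := hr
  rw [Real.norm_of_nonneg (by positivity)]
  have hm0 : 2 ≤ m := by have := abs_nonneg K; linarith
  have hcube : 0 ≤ (r - m) ^ 2 * (r + 2 * m) := by positivity
  have hKr : K * r ≤ (m - 2) * r := by
    have := le_abs_self K
    exact mul_le_mul_of_nonneg_right (by linarith) hr.le
  have hmr : m * r ≤ m ^ 2 * r := mul_le_mul_of_nonneg_right (by nlinarith) hr.le
  calc r ^ n * Real.exp (-r ^ 3 / 3 + K * r)
      ≤ (n.factorial * Real.exp r) * Real.exp (2 * m ^ 3 / 3 - 2 * r) := by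
        gcongr
        · exact pow_le_factorial_mul_exp n hr.le
        · nlinarith
    _ = (n.factorial * Real.exp (2 * m ^ 3 / 3)) * Real.exp (-1 * r) := by
        rw [mul_assoc, mul_assoc, ← Real.exp_add, ← Real.exp_add]
        congr 2
        ring

lemma integrableOn_airyMoment (n : ℕ) (ω z : ℂ) :
    IntegrableOn (fun r : ℝ => (r : ℂ) ^ n * Complex.exp (-(r : ℂ) ^ 3 / 3 - ω * z * r))
      (Ioi 0) := by
  refine Integrable.mono' (integrableOn_pow_mul_exp_neg_cube n (-(ω * z).re)) (by fun_prop) ?_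
  filter_upwards [ae_restrict_mem measurableSet_Ioi] with r hr
  rw [norm_airyMoment_integrand n ω z hr, neg_mul, ← sub_eq_add_neg]

lemma hasDerivAt_airyMoment (n : ℕ) (ω z : ℂ) :
    HasDerivAt (airyMoment n ω) (-ω * airyMoment (n + 1) ω z) z := by
  have key := (hasDerivAt_integral_of_dominated_loc_of_deriv_le
    (μ := volume.restrict (Ioi (0 : ℝ))) (x₀ := z) (s := Metric.ball z 1)
    (F := fun z r => (r : ℂ) ^ n * Complex.exp (-(r : ℂ) ^ 3 / 3 - ω * z * r))
    (F' := fun z r => -ω * ((r : ℂ) ^ (n + 1) * Complex.exp (-(r : ℂ) ^ 3 / 3 - ω * z * r)))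
    (bound := fun r => ‖ω‖ *
      (r ^ (n + 1) * Real.exp (-r ^ 3 / 3 + (‖ω‖ * (‖z‖ + 1)) * r)))
    (Metric.ball_mem_nhds z one_pos) (Eventually.of_forall fun _ => by fun_prop)
    (integrableOn_airyMoment n ω z) (by fun_prop) ?_
    ((integrableOn_pow_mul_exp_neg_cube (n + 1) _).const_mul _) ?_).2
  · rw [integral_const_mul] at key
    exact key
  · filter_upwards [ae_restrict_mem measurableSet_Ioi] with r hr w hw
    have hr : 0 < r := hr
    rw [norm_mul, norm_neg, norm_airyMoment_integrand _ ω w hr]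
    have hw' : ‖w‖ ≤ ‖z‖ + 1 := by
      have h1 : ‖w - z‖ < 1 := by simpa [dist_eq_norm] using hw
      have h2 := norm_le_norm_add_norm_sub' w z
      linarith
    have hre : -(ω * w).re ≤ ‖ω‖ * (‖z‖ + 1) := by
      calc -(ω * w).re ≤ ‖ω * w‖ := (neg_le_abs _).trans (Complex.abs_re_le_norm _)
        _ = ‖ω‖ * ‖w‖ := norm_mul _ _
        _ ≤ _ := by gcongr
    have := mul_le_mul_of_nonneg_right hre hr.le
    gcongr
    linarith
  · refine Eventually.of_forall fun r w _ => ?_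
    have h : HasDerivAt (fun w : ℂ => -(r : ℂ) ^ 3 / 3 - ω * w * r) (-(ω * 1 * r)) w :=
      (((hasDerivAt_id w).const_mul ω).mul_const (r : ℂ)).const_sub _
    refine (h.cexp.const_mul ((r : ℂ) ^ n)).congr_deriv ?_
    ring

lemma norm_airyMoment_le (n : ℕ) (ω z : ℂ) (h : 1 < (ω * z).re) :
    ‖airyMoment n ω z‖ ≤ n.factorial * ((ω * z).re - 1)⁻¹ := by
  set k := (ω * z).re with hk
  have hint : ∫ r in Ioi (0 : ℝ), n.factorial * Real.exp ((1 - k) * r) =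
      n.factorial * (k - 1)⁻¹ := by
    rw [integral_const_mul, integral_exp_mul_Ioi (by linarith)]
    rw [mul_zero, Real.exp_zero, ← neg_sub k 1, neg_div_neg_eq, one_div]
  rw [← hint]
  have hI : IntegrableOn (fun r : ℝ => n.factorial * Real.exp ((1 - k) * r)) (Ioi 0) := by
    have := (exp_neg_integrableOn_Ioi 0 (sub_pos.2 h)).const_mul (n.factorial : ℝ)
    rw [neg_sub] at this
    exact this
  refine norm_integral_le_of_norm_le hI ?_
  filter_upwards [ae_restrict_mem measurableSet_Ioi] with r hr
  have hr : 0 < r := hr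
  rw [norm_airyMoment_integrand n ω z hr, ← hk]
  calc r ^ n * Real.exp (-r ^ 3 / 3 - k * r)
      ≤ (n.factorial * Real.exp r) * Real.exp (-k * r) := by
        gcongr
        · exact pow_le_factorial_mul_exp n hr.le
        · have : 0 ≤ r ^ 3 := by positivity
          linarith
    _ = _ := by
        rw [mul_assoc, ← Real.exp_add]
        congr 2
        ring

lemma tendsto_airyMoment (n : ℕ) {ω : ℂ} (hω : 0 < ω.re) (s : ℝ) :
    Tendsto (fun x : ℝ => airyMoment n ω (x + s * I)) atTop (𝓝 0) := by
  have hre : Tendsto (fun x : ℝ => (ω * (x + s * I)).re - 1) atTop atTop := by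
    have : (fun x : ℝ => (ω * (x + s * I)).re - 1) = fun x => ω.re * x + (-(ω.im * s) - 1) := by
      ext x
      simp
      ring
    rw [this]
    exact tendsto_atTop_add_const_right _ _ (tendsto_id.const_mul_atTop hω)
  have hlim : Tendsto (fun x : ℝ => (n.factorial : ℝ) * ((ω * (x + s * I)).re - 1)⁻¹)
      atTop (𝓝 0) := by
    simpa using (tendsto_inv_atTop_zero.comp hre).const_mul (n.factorial : ℝ)
  refine squeeze_zero_norm' ?_ hlim
  filter_upwards [hre.eventually_gt_atTop 0] with x hx
  exact norm_airyMoment_le n ω _ (by linarith)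

lemma airyMoment_two_add (ω z : ℂ) : airyMoment 2 ω z + ω * z * airyMoment 0 ω z = 1 := by
  have hderiv : ∀ r ∈ Ici (0 : ℝ),
      HasDerivAt (fun r : ℝ => -Complex.exp (-(r : ℂ) ^ 3 / 3 - ω * z * r))
        ((r : ℂ) ^ 2 * Complex.exp (-(r : ℂ) ^ 3 / 3 - ω * z * r) +
          ω * z * ((r : ℂ) ^ 0 * Complex.exp (-(r : ℂ) ^ 3 / 3 - ω * z * r))) r := by
    intro r _
    have h1 : HasDerivAt (fun r : ℂ => -r ^ 3 / 3 - ω * z * r)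
        (-((3 : ℕ) * (r : ℂ) ^ 2) / 3 - ω * z * 1) (r : ℂ) :=
      (((hasDerivAt_pow 3 (r : ℂ)).neg).div_const 3).sub ((hasDerivAt_id _).const_mul _)
    refine (h1.cexp.neg).comp_ofReal.congr_deriv ?_
    push_cast
    ring
  have hint := ((integrableOn_airyMoment 2 ω z).add
    ((integrableOn_airyMoment 0 ω z).const_mul (ω * z)))
  have hlim : Tendsto (fun r : ℝ => -Complex.exp (-(r : ℂ) ^ 3 / 3 - ω * z * r)) atTop (𝓝 0) := by
    have h0 := (integrableOn_airyMoment 0 ω z).neg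
    refine tendsto_zero_of_hasDerivAt_of_integrableOn_Ioi (a := 0)
      (fun r hr => hderiv r (Ioi_subset_Ici_self hr)) hint ?_
    refine h0.congr (Eventually.of_forall fun r => ?_)
    simp
  have h := integral_Ioi_of_hasDerivAt_of_tendsto' hderiv hint hlim
  have hadd := integral_add (integrableOn_airyMoment 2 ω z)
    ((integrableOn_airyMoment 0 ω z).const_mul (ω * z))
  rw [integral_const_mul] at hadd
  unfold airyMoment
  rw [← hadd, h]
  simp

lemma airyMoment_conj (n : ℕ) (ω z : ℂ) :
    airyMoment n (conj ω) (conj z) = conj (airyMoment n ω z) := by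
  unfold airyMoment
  rw [← integral_conj]
  congr 1
  ext r
  have h3 : conj (3 : ℂ) = 3 := Complex.conj_ofReal 3
  simp [← Complex.exp_conj, h3]

lemma airyMoment_zero_zero_ne (ω : ℂ) : airyMoment 0 ω 0 ≠ 0 := by
  have h : airyMoment 0 ω 0 = ((∫ r in Ioi (0 : ℝ), Real.exp (-r ^ 3 / 3) : ℝ) : ℂ) := by
    unfold airyMoment
    rw [← integral_complex_ofReal]
    congr 1
    ext r
    simp
  have hI : IntegrableOn (fun r : ℝ => Real.exp (-r ^ 3 / 3)) (Ioi 0) := by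
    simpa using integrableOn_pow_mul_exp_neg_cube 0 0
  rw [h, Complex.ofReal_ne_zero]
  refine ((setIntegral_pos_iff_support_of_nonneg_ae
    (Eventually.of_forall fun r => (Real.exp_pos _).le) hI).2 ?_).ne'
  have : Function.support (fun r : ℝ => Real.exp (-r ^ 3 / 3)) = univ := by
    ext r
    simp [(Real.exp_pos _).ne']
  simp [this]

/-- There is a solution of the Airy equation, symmetric under conjugation up to sign, which decays
along every horizontal ray to the right. -/
lemma exists_decaying_airy : ∃ U V : ℂ → ℂ,
    (∀ z, HasDerivAt U (V z) z) ∧ (∀ z, HasDerivAt V (z * U z) z) ∧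
    (∀ s : ℝ, Tendsto (fun x : ℝ => U (x + s * I)) atTop (𝓝 0)) ∧
    (∀ s : ℝ, Tendsto (fun x : ℝ => V (x + s * I)) atTop (𝓝 0)) ∧
    (∀ z, U (conj z) = -conj (U z)) ∧ U 0 ≠ 0 := by
  set ω : ℂ := ⟨1 / 2, √3 / 2⟩ with hω
  have hsq : √3 * √3 = 3 := Real.mul_self_sqrt (by norm_num)
  have hω2 : ω ^ 2 = ω - 1 := by
    rw [pow_two]
    apply Complex.ext <;> simp [hω] <;> linarith
  have hω3 : ω ^ 3 = -1 := by linear_combination (ω + 1) * hω2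
  have hσ3 : (conj ω) ^ 3 = -1 := by rw [← map_pow, hω3]; simp
  have hre : 0 < ω.re := by norm_num [hω]
  have hre' : 0 < (conj ω).re := by simpa using hre
  refine ⟨fun z => ω * airyMoment 0 ω z - conj ω * airyMoment 0 (conj ω) z,
    fun z => ω * (-ω * airyMoment 1 ω z) - conj ω * (-conj ω * airyMoment 1 (conj ω) z),
    fun z => ((hasDerivAt_airyMoment 0 ω z).const_mul _).sub
      ((hasDerivAt_airyMoment 0 (conj ω) z).const_mul _), fun z => ?_, fun s => ?_, fun s => ?_,
    fun z => ?_, ?_⟩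
  · refine ((((hasDerivAt_airyMoment 1 ω z).const_mul (-ω)).const_mul ω).sub
      (((hasDerivAt_airyMoment 1 (conj ω) z).const_mul (-conj ω)).const_mul (conj ω))).congr_deriv ?_
    linear_combination airyMoment_two_add (conj ω) z - airyMoment_two_add ω z +
      airyMoment 2 ω z * hω3 - airyMoment 2 (conj ω) z * hσ3
  · simpa using ((tendsto_airyMoment 0 hre s).const_mul ω).sub
      ((tendsto_airyMoment 0 hre' s).const_mul (conj ω))
  · simpa using (((tendsto_airyMoment 1 hre s).const_mul (-ω)).const_mul ω).sub
      (((tendsto_airyMoment 1 hre' s).const_mul (-conj ω)).const_mul (conj ω))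
  · have h := airyMoment_conj 0 (conj ω) z
    rw [Complex.conj_conj] at h
    simp only [map_sub, map_mul, Complex.conj_conj, h, airyMoment_conj 0 ω z]
    ring
  · have h : airyMoment 0 (conj ω) 0 = airyMoment 0 ω 0 := by simp [airyMoment]
    simp only [h, ← sub_mul]
    refine mul_ne_zero ?_ (airyMoment_zero_zero_ne ω)
    intro h0
    have := congrArg Complex.im h0
    simp [hω] at this

lemma hasDerivAt_horizontal {f : ℂ → ℂ} {f' : ℂ} {x s : ℝ}
    (h : HasDerivAt f f' (x + s * I)) : HasDerivAt (fun x : ℝ => f (x + s * I)) f' x :=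
  (HasDerivAt.comp_add_const (x : ℂ) (s * I) h).comp_ofReal

lemma hasDerivAt_airy_flux {U V : ℂ → ℂ} (hU : ∀ z, HasDerivAt U (V z) z)
    (hV : ∀ z, HasDerivAt V (z * U z) z) (x s : ℝ) :
    HasDerivAt (fun x : ℝ => (conj (U (x + s * I)) * V (x + s * I)).im)
      (s * ‖U (x + s * I)‖ ^ 2) x := by
  have h1 := hasDerivAt_horizontal (hU (x + s * I))
  have h2 := hasDerivAt_horizontal (hV (x + s * I))
  have h3 := Complex.imCLM.hasFDerivAt.comp_hasDerivAt x (h1.star.mul h2)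
  refine h3.congr_deriv ?_
  rw [← Complex.normSq_eq_norm_sq, Complex.normSq_apply]
  simp
  ring

lemma airy_flux_neg {U V : ℂ → ℂ} (hU : ∀ z, HasDerivAt U (V z) z)
    (hV : ∀ z, HasDerivAt V (z * U z) z)
    (hU0 : ∀ s : ℝ, Tendsto (fun x : ℝ => U (x + s * I)) atTop (𝓝 0))
    (hV0 : ∀ s : ℝ, Tendsto (fun x : ℝ => V (x + s * I)) atTop (𝓝 0)) (hne : U 0 ≠ 0) (x : ℝ) {s : ℝ} (hs : 0 < s) :
    (conj (U (x + s * I)) * V (x + s * I)).im < 0 := by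
  set G : ℝ → ℝ := fun x => (conj (U (x + s * I)) * V (x + s * I)).im
  have hd : ∀ x : ℝ, HasDerivAt G (s * ‖U (x + s * I)‖ ^ 2) x := fun x =>
    hasDerivAt_airy_flux hU hV x s
  have hmono : Monotone G := monotone_of_deriv_nonneg (fun x => (hd x).differentiableAt)
    fun x => by rw [(hd x).deriv]; positivity
  have hlim : Tendsto G atTop (𝓝 0) := by
    have h := ((Complex.continuous_conj.tendsto _).comp (hU0 s)).mul (hV0 s)
    have h' := (Complex.continuous_im.tendsto _).comp h
    rw [map_zero, zero_mul] at h'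
    exact h'
  have hle : ∀ y, G y ≤ 0 := fun y => hmono.ge_of_tendsto hlim y
  refine lt_of_le_of_ne (hle x) fun h0 => hne ?_
  have hzero : ∀ y, x ≤ y → G y = 0 := fun y hy =>
    le_antisymm (hle y) (h0.symm.le.trans (hmono hy))
  have hUzero : ∀ y, x < y → U (y + s * I) = 0 := by
    intro y hy
    have h1 : HasDerivAt G 0 y := (hasDerivAt_const y (0 : ℝ)).congr_of_eventuallyEq <| by
      filter_upwards [lt_mem_nhds hy] with u hu using hzero u hu.le
    have h2 := (hd y).unique h1
    simpa [hs.ne'] using h2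
  have hana : AnalyticOnNhd ℂ U univ := fun z _ =>
    (show Differentiable ℂ U from fun z => (hU z).differentiableAt).analyticAt z
  have hfreq : ∃ᶠ z in 𝓝[≠] ((x : ℂ) + s * I), U z = 0 := by
    have ht : Tendsto (fun y : ℝ => (y : ℂ) + s * I) (𝓝[>] x) (𝓝[≠] ((x : ℂ) + s * I)) := by
      refine tendsto_nhdsWithin_iff.2 ⟨?_, ?_⟩
      · exact Tendsto.mono_left
          (Continuous.tendsto (by fun_prop : Continuous fun y : ℝ => (y : ℂ) + s * I) x)
          nhdsWithin_le_nhds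
      · filter_upwards [self_mem_nhdsWithin] with y hy h
        have : (y : ℂ) = x := add_right_cancel h
        exact (ne_of_gt hy) (by exact_mod_cast this)
    refine ht.frequently (Eventually.frequently ?_)
    filter_upwards [self_mem_nhdsWithin] with y hy using hUzero y hy
  exact hana.eqOn_zero_of_preconnected_of_frequently_eq_zero isPreconnected_univ
    (mem_univ _) hfreq (mem_univ 0)

/-- The modulus of the decaying solution grows along vertical rays leaving the real axis. -/
lemma strictMonoOn_norm_sq_vertical {U V : ℂ → ℂ} (hU : ∀ z, HasDerivAt U (V z) z)
    (hV : ∀ z, HasDerivAt V (z * U z) z)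
    (hU0 : ∀ s : ℝ, Tendsto (fun x : ℝ => U (x + s * I)) atTop (𝓝 0))
    (hV0 : ∀ s : ℝ, Tendsto (fun x : ℝ => V (x + s * I)) atTop (𝓝 0)) (hne : U 0 ≠ 0) (x : ℝ) :
    StrictMonoOn (fun s : ℝ => ‖U (x + s * I)‖ ^ 2) (Ici 0) := by
  have hd : ∀ s : ℝ, HasDerivAt (fun s : ℝ => ‖U (x + s * I)‖ ^ 2)
      (-2 * (conj (U (x + s * I)) * V (x + s * I)).im) s := by
    intro s
    have hl : HasDerivAt (fun s : ℂ => (x : ℂ) + s * I) (1 * I) (s : ℂ) :=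
      ((hasDerivAt_id (s : ℂ)).mul_const I).const_add _
    have h := (HasDerivAt.comp (s : ℂ) (hU (x + s * I)) hl).comp_ofReal.norm_sq
    refine h.congr_deriv ?_
    simp [Complex.inner]
    ring
  refine strictMonoOn_of_deriv_pos (convex_Ici 0)
    (fun s _ => (hd s).continuousAt.continuousWithinAt) fun s hs => ?_
  rw [interior_Ici] at hs
  rw [(hd s).deriv]
  linarith [airy_flux_neg hU hV hU0 hV0 hne x hs]

/-- The Wronskian of two solutions of the Airy equation is constant. -/
lemma airy_wronskian_const {u u' w w' : ℂ → ℂ} (hu : ∀ z, HasDerivAt u (u' z) z)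
    (hu' : ∀ z, HasDerivAt u' (z * u z) z) (hw : ∀ z, HasDerivAt w (w' z) z)
    (hw' : ∀ z, HasDerivAt w' (z * w z) z) (z : ℂ) :
    u z * w' z - u' z * w z = u 0 * w' 0 - u' 0 * w 0 := by
  have hd : ∀ z, HasDerivAt (fun z => u z * w' z - u' z * w z) 0 z := fun z => by
    refine (((hu z).mul (hw' z)).sub ((hu' z).mul (hw z))).congr_deriv ?_
    ring
  exact is_const_of_deriv_eq_zero (fun z => (hd z).differentiableAt) (fun z => (hd z).deriv) z 0

/-- Where the Airy determinant of two points and its derivative in the direction `(1, 1)` both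
vanish, every solution has the same square at the two points. -/
lemma airy_sq_eq_of_double_zero {A A' B B' U V : ℂ → ℂ} (hA : ∀ z, HasDerivAt A (A' z) z)
    (hA' : ∀ z, HasDerivAt A' (z * A z) z) (hB : ∀ z, HasDerivAt B (B' z) z)
    (hB' : ∀ z, HasDerivAt B' (z * B z) z) (hU : ∀ z, HasDerivAt U (V z) z)
    (hV : ∀ z, HasDerivAt V (z * U z) z) (hk : A 0 * B' 0 - A' 0 * B 0 ≠ 0) {a b : ℂ}
    (h0 : A a * B b - A b * B a = 0)
    (h1 : A' a * B b + A a * B' b - (A' b * B a + A b * B' a) = 0) :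
    U a ^ 2 = U b ^ 2 := by
  set k := A 0 * B' 0 - A' 0 * B 0 with hkdef
  set p := U 0 * B' 0 - V 0 * B 0
  set q := A 0 * V 0 - A' 0 * U 0
  have hW := airy_wronskian_const hA hA' hB hB'
  have hlin : ∀ z, k * U z = p * A z + q * B z := fun z => by
    linear_combination -U z * hW z + A z * airy_wronskian_const hU hV hB hB' z +
      B z * airy_wronskian_const hA hA' hU hV z
  obtain ⟨κ, hAκ, hBκ⟩ : ∃ κ, A b = κ * A a ∧ B b = κ * B a := by
    by_cases hAa : A a = 0
    · have hBa : B a ≠ 0 := fun hBa => hk (by rw [hkdef, ← hW a, hAa, hBa]; ring)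
      refine ⟨B b / B a, ?_, by field_simp⟩
      have : A b * B a = 0 := by rw [hAa] at h0; linear_combination -h0
      simp [hAa, (mul_eq_zero.1 this).resolve_right hBa]
    · refine ⟨A b / A a, by field_simp, ?_⟩
      field_simp
      linear_combination h0
  have hκ : κ ^ 2 = 1 := by
    have : k * (1 - κ ^ 2) = 0 := by
      have ha := hW a
      have hb := hW b
      rw [hAκ, hBκ] at hb h1
      linear_combination κ * h1 - hb + κ ^ 2 * ha
    rcases mul_eq_zero.1 this with h | h
    · exact absurd h hk
    · linear_combination -h
  have hUκ : U b = κ * U a := by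
    apply mul_left_cancel₀ hk
    rw [hlin b, hAκ, hBκ]
    linear_combination -κ * hlin a
  rw [hUκ, mul_pow, hκ, one_mul]

lemma airyAi_airyBi_wronskian_ne_zero {Ai Bi : ℂ → ℂ} (hAi : IsAiryAi Ai) (hBi : IsAiryBi Bi) :
    Ai 0 * deriv Bi 0 - deriv Ai 0 * Bi 0 ≠ 0 := by
  obtain ⟨-, -, -, hA0, hA0'⟩ := hAi
  obtain ⟨-, -, -, hB0, hB0'⟩ := hBi
  rw [hA0, hA0', hB0, hB0']
  have h1 : 0 < Real.Gamma (2 / 3) := Real.Gamma_pos_of_pos (by norm_num)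
  have h2 : 0 < Real.Gamma (1 / 3) := Real.Gamma_pos_of_pos (by norm_num)
  norm_cast
  rw [neg_div, neg_mul, sub_neg_eq_add]
  positivity

/-- Every non-real eigenvalue of the model operator `T(ε)` is a simple zero of the
characteristic function: collisions of eigenvalues are impossible outside the real axis. -/
theorem nonreal_eigenvalues_simple (Ai Bi : ℂ → ℂ)
    (hAi : IsAiryAi Ai) (hBi : IsAiryBi Bi)
    (ε : ℝ) (hε : 0 < ε) (lam : ℂ) (him : lam.im ≠ 0)
    (hlam : airyW Ai Bi ε lam = 0) :
    deriv (airyW Ai Bi ε) lam ≠ 0 := by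
  intro hder
  have hk := airyAi_airyBi_wronskian_ne_zero hAi hBi
  obtain ⟨hAd, hAd', hAode, -⟩ := hAi
  obtain ⟨hBd, hBd', hBode, -⟩ := hBi
  obtain ⟨U, V, hU, hV, hU0, hV0, hconj, hne⟩ := exists_decaying_airy
  have hA : ∀ z, HasDerivAt Ai (deriv Ai z) z := fun z => (hAd z).hasDerivAt
  have hB : ∀ z, HasDerivAt Bi (deriv Bi z) z := fun z => (hBd z).hasDerivAt
  have hA' : ∀ z, HasDerivAt (deriv Ai) (z * Ai z) z := fun z => hAode z ▸ (hAd' z).hasDerivAt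
  have hB' : ∀ z, HasDerivAt (deriv Bi) (z * Bi z) z := fun z => hBode z ▸ (hBd' z).hasDerivAt
  set c : ℝ := ε ^ ((1 : ℝ) / 3) with hc
  have hcpos : 0 < c := Real.rpow_pos_of_pos hε _
  have hcne : (c : ℂ) ≠ 0 := Complex.ofReal_ne_zero.2 hcpos.ne'
  set a : ℂ := c * (lam + I) with ha
  set b : ℂ := c * (lam - I) with hb
  have h0 : Ai a * Bi b - Ai b * Bi a = 0 := hlam
  have hla : HasDerivAt (fun l : ℂ => (c : ℂ) * (l + I)) (c * 1) lam :=
    ((hasDerivAt_id lam).add_const I).const_mul _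
  have hlb : HasDerivAt (fun l : ℂ => (c : ℂ) * (l - I)) (c * 1) lam :=
    ((hasDerivAt_id lam).sub_const I).const_mul _
  have hWd := (((hA a).comp lam hla).mul ((hB b).comp lam hlb)).sub
    (((hA b).comp lam hlb).mul ((hB a).comp lam hla))
  have hWd' : deriv (airyW Ai Bi ε) lam = _ := hWd.deriv
  have h1 : deriv Ai a * Bi b + Ai a * deriv Bi b -
      (deriv Ai b * Bi a + Ai b * deriv Bi a) = 0 := by
    rw [hder] at hWd'
    apply mul_left_cancel₀ hcne
    simp only [Function.comp_apply] at hWd'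
    rw [← ha, ← hb] at hWd'
    linear_combination -hWd'
  have hsq := airy_sq_eq_of_double_zero hA hA' hB hB' hU hV hk h0 h1
  have hnorm : ‖U a‖ ^ 2 = ‖U b‖ ^ 2 := by rw [← norm_pow, hsq, norm_pow]
  have habs : ∀ x s : ℝ, ‖U (x + s * I)‖ = ‖U (x + |s| * I)‖ := by
    intro x s
    rcases abs_choice s with h | h <;> rw [h]
    have := hconj (x + s * I)
    rw [map_add, map_mul, Complex.conj_ofReal, Complex.conj_ofReal, Complex.conj_I] at this
    rw [Complex.ofReal_neg, neg_mul, ← mul_neg, this, norm_neg, RCLike.norm_conj]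
  have haeq : a = ((c * lam.re : ℝ) : ℂ) + ((c * (lam.im + 1) : ℝ) : ℂ) * I := by
    apply Complex.ext <;> simp [ha]
  have hbeq : b = ((c * lam.re : ℝ) : ℂ) + ((c * (lam.im - 1) : ℝ) : ℂ) * I := by
    apply Complex.ext <;> simp [hb]
  rw [haeq, hbeq, habs, habs _ (c * (lam.im - 1))] at hnorm
  have heq := (strictMonoOn_norm_sq_vertical hU hV hU0 hV0 hne (c * lam.re)).injOn
    (mem_Ici.2 (abs_nonneg _)) (mem_Ici.2 (abs_nonneg _)) hnorm
  rw [abs_mul, abs_mul] at heq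
  have heq' := mul_left_cancel₀ (abs_pos.2 hcpos.ne').ne' heq
  rw [abs_eq_abs] at heq'
  rcases heq' with h | h
  · linarith
  · exact him (by linarith)
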